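/- Let 1 → K → G → Γ → 1 be a short exact sequence of finitely generated groups, with surjection p : G → Γ, and let ρ : Γ → ℤ be a surjective homomorphism. Then the composite ρ∘p : G → ℤ is surjective, and the rank gradients agree: rg(G, ρ∘p) = rg(Γ, ρ). -/

import Mathlib

/-!
For `i ≥ 1` the group `G_i` is the preimage of `Γ_i` under `p`, so `p` restricts to a surjection
`G_i → Γ_i` with kernel isomorphic to `K`. Hence `rk Γ_i ≤ rk G_i ≤ rk Γ_i + rk K`
(`grank_le_of_surjective`, `grank_le_add_ker`), all groups involved being finitely generated since
the index `[G : G_i] = [Γ : Γ_i] = i` is finite. Dividing by `i`, the two normalised ranks differ by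
at most `rk K / i → 0`, so their lower limits agree (`liminf_eq_of_le_of_le_add`).
-/

/-- The rank of a group: the minimal number of generators. -/
noncomputable def grank (G : Type*) [Group G] : ℕ :=
  sInf {n : ℕ | ∃ S : Finset G, S.card = n ∧ Subgroup.closure (S : Set G) = ⊤}

/-- `modKer φ i` is the subgroup `G_i = Ker(G → ℤ → ℤ/iℤ)`. -/
def modKer {G : Type*} [Group G] (φ : G →* Multiplicative ℤ) (i : ℕ) : Subgroup G :=
  ((AddMonoidHom.toMultiplicative (Int.castAddHom (ZMod i))).comp φ).ker

/-- The rank gradient of `(G, φ)`: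
`liminf_{i → ∞} rk(G_i) / [G : G_i]`. -/
noncomputable def rg {G : Type*} [Group G] (φ : G →* Multiplicative ℤ) : ℝ :=
  Filter.liminf
    (fun i : ℕ => (grank (modKer φ i) : ℝ) / ((modKer φ i).index : ℝ)) Filter.atTop

open Filter Topology

lemma grank_le_card {G : Type*} [Group G] (S : Finset G)
    (hS : Subgroup.closure (S : Set G) = ⊤) : grank G ≤ S.card :=
  Nat.sInf_le ⟨S, rfl, hS⟩

lemma exists_card_eq_grank (G : Type*) [Group G] [h : Group.FG G] :
    ∃ S : Finset G, S.card = grank G ∧ Subgroup.closure (S : Set G) = ⊤ := by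
  obtain ⟨S, hS⟩ := Group.fg_def.mp h
  exact Nat.sInf_mem
    (s := {n : ℕ | ∃ S : Finset G, S.card = n ∧ Subgroup.closure (S : Set G) = ⊤})
    ⟨S.card, S, rfl, hS⟩

lemma grank_le_of_surjective {A B : Type*} [Group A] [Group B] [Group.FG A]
    (f : A →* B) (hf : Function.Surjective f) : grank B ≤ grank A := by
  classical
  obtain ⟨S, hc, hS⟩ := exists_card_eq_grank A
  rw [← hc]
  refine (grank_le_card (S.image f) ?_).trans Finset.card_image_le
  rw [Finset.coe_image, ← MonoidHom.map_closure, hS, ← MonoidHom.range_eq_map,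
    MonoidHom.range_eq_top.mpr hf]

/-- Lifts of generators of `B` together with generators of the kernel generate `A`. -/
lemma grank_le_add_ker {A B : Type*} [Group A] [Group B] [Group.FG B]
    (f : A →* B) (hf : Function.Surjective f) [Group.FG f.ker] :
    grank A ≤ grank B + grank f.ker := by
  classical
  obtain ⟨S, hc, hS⟩ := exists_card_eq_grank B
  obtain ⟨T, hd, hT⟩ := exists_card_eq_grank f.ker
  rw [← hc, ← hd]
  obtain ⟨g, hg⟩ := hf.hasRightInverse
  have hT' : Subgroup.closure (((↑) : f.ker → A) '' (T : Set f.ker)) = f.ker := by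
    have := congrArg (Subgroup.map f.ker.subtype) hT
    rwa [MonoidHom.map_closure, ← MonoidHom.range_eq_map, Subgroup.range_subtype] at this
  refine (grank_le_card (S.image g ∪ T.image (↑)) ?_).trans
    ((Finset.card_union_le _ _).trans (add_le_add Finset.card_image_le Finset.card_image_le))
  rw [Finset.coe_union, Finset.coe_image, Finset.coe_image, Subgroup.closure_union, hT',
    ← Subgroup.comap_map_eq, MonoidHom.map_closure, ← Set.image_comp, hg.comp_eq_id,
    Set.image_id, hS, Subgroup.comap_top]

/-- Boundedness is not assumed: if one of the two sequences tends to `∞`, so does the other, and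
both lower limits take the same junk value. -/
lemma liminf_eq_of_le_of_le_add {f g e : ℕ → ℝ} (h1 : ∀ᶠ i in atTop, g i ≤ f i)
    (h2 : ∀ᶠ i in atTop, f i ≤ g i + e i) (he : Tendsto e atTop (𝓝 0)) (h0 : ∀ i, 0 ≤ g i) :
    liminf f atTop = liminf g atTop := by
  rw [liminf_eq, liminf_eq]
  set F := {a | ∀ᶠ i in atTop, a ≤ f i}
  set E := {a | ∀ᶠ i in atTop, a ≤ g i}
  have hEF : E ⊆ F := fun a (ha : ∀ᶠ i in atTop, a ≤ g i) => by
    filter_upwards [ha, h1] with i using le_trans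
  have hFE : ∀ a ∈ F, ∀ ε > 0, a - ε ∈ E := fun a (ha : ∀ᶠ i in atTop, a ≤ f i) ε hε => by
    filter_upwards [ha, h2, he.eventually_lt_const hε] with i _ _ _
    linarith
  have hE : E.Nonempty := ⟨0, Eventually.of_forall h0⟩
  by_cases hb : BddAbove E
  · have key : ∀ a ∈ F, a ≤ sSup E := fun a ha => le_of_forall_pos_le_add fun ε hε => by
      linarith [le_csSup hb (hFE a ha ε hε)]
    exact le_antisymm (csSup_le (hE.mono hEF) key) (csSup_le_csSup ⟨_, key⟩ hE hEF)
  · rw [Real.sSup_of_not_bddAbove hb, Real.sSup_of_not_bddAbove fun h => hb (h.mono hEF)]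

lemma index_modKer {G : Type*} [Group G] (φ : G →* Multiplicative ℤ)
    (hφ : Function.Surjective φ) (i : ℕ) : (modKer φ i).index = i := by
  have hs : Function.Surjective
      ((AddMonoidHom.toMultiplicative (Int.castAddHom (ZMod i))).comp φ) :=
    Function.Surjective.comp (g := AddMonoidHom.toMultiplicative (Int.castAddHom (ZMod i)))
      (ZMod.intCast_surjective (n := i)) hφ
  rw [modKer, Subgroup.index_ker, MonoidHom.range_eq_top.mpr hs, Subgroup.card_top]
  exact Nat.card_zmod i

/-- Given a short exact sequence `1 → K → G → Γ → 1` of finitely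
generated groups (`p : G → Γ` surjective with finitely generated kernel `K`), and a
surjective homomorphism `ρ : Γ → ℤ`, the composite `ρ ∘ p : G → ℤ` is surjective and
`rg(G, ρ ∘ p) = rg(Γ, ρ)`. -/
theorem rg_comp_eq_of_surjective_of_fg_kernel
    {G Γ : Type*} [Group G] [Group Γ]
    [Group.FG G] [Group.FG Γ]
    (p : G →* Γ) (hp : Function.Surjective p) (hK : Group.FG p.ker)
    (ρ : Γ →* Multiplicative ℤ) (hρ : Function.Surjective ρ) :
    Function.Surjective (ρ.comp p) ∧ rg (ρ.comp p) = rg ρ := by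
  have hs : Function.Surjective (ρ.comp p) := hρ.comp hp
  have hrank : ∀ i : ℕ, 0 < i → grank (modKer ρ i) ≤ grank (modKer (ρ.comp p) i) ∧
      grank (modKer (ρ.comp p) i) ≤ grank (modKer ρ i) + grank p.ker := by
    intro i hi
    have : (modKer ρ i).FiniteIndex := ⟨by rw [index_modKer ρ hρ]; exact hi.ne'⟩
    have : (modKer (ρ.comp p) i).FiniteIndex := ⟨by rw [index_modKer _ hs]; exact hi.ne'⟩
    have : Group.FG (modKer ρ i) := inferInstance
    have : Group.FG (modKer (ρ.comp p) i) := inferInstance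
    -- `G_i` is by definition the preimage of `Γ_i`.
    let f : modKer (ρ.comp p) i →* modKer ρ i := p.subgroupComap (modKer ρ i)
    have hf : Function.Surjective f := p.subgroupComap_surjective_of_surjective _ hp
    have hker : f.ker = p.ker.subgroupOf (modKer (ρ.comp p) i) := by
      ext x
      exact Subtype.ext_iff
    let e : f.ker ≃* p.ker := (MulEquiv.subgroupCongr hker).trans
      (Subgroup.subgroupOfEquivOfLe (p.ker_le_comap (modKer ρ i)))
    have : Group.FG f.ker := Group.fg_of_surjective (f := e.symm.toMonoidHom) e.symm.surjective
    exact ⟨grank_le_of_surjective f hf, (grank_le_add_ker f hf).trans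
      (Nat.add_le_add_left (grank_le_of_surjective e.symm.toMonoidHom e.symm.surjective) _)⟩
  refine ⟨hs, ?_⟩
  unfold rg
  simp only [index_modKer _ hs, index_modKer _ hρ]
  refine liminf_eq_of_le_of_le_add (e := fun i : ℕ => (grank p.ker : ℝ) / i) ?_ ?_
    (tendsto_const_div_atTop_nhds_zero_nat _) fun i => by positivity
  · filter_upwards [eventually_gt_atTop 0] with i hi
    have := (hrank i hi).1
    gcongr
  · filter_upwards [eventually_gt_atTop 0] with i hi
    rw [← add_div]
    have := (hrank i hi).2
    gcongr
    exact_mod_cast this
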